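/- arXiv:1107.1814 — 2 statements merged into one kernel-verified Lean document; each statement's English description precedes it below -/
import Mathlib

section
/- Let N be a pure Nash equilibrium of the game induced by BCOORD with parameter p ≥ 1 and O any assignment. Then the maximum completion time of any job in N is at most (∑_j L(N_j)^{p+1})^{1/(p+1)} + max_j L(O_j). -/
/-!
The bound follows from a single deviation. Let job `i` move to a machine `j` minimizing `w i`.
There its inefficiency is `1`, so the equilibrium condition bounds its completion time by the new
load of `j`, which is at most `load w N j + w i j`. The first summand is a coordinate of the load
vector, hence at most the `ℓ^(p+1)` norm of that vector (`load_le_norm`). The second is at most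
`w i (O i)`, which is part of the load of the machine `O i` under `O` (`le_load`).
-/

/-- The minimum load of job `i` over all machines. -/
noncomputable def wmin {n m : ℕ} (w : Fin n → Fin m → ℝ) (i : Fin n) : ℝ :=
  sInf (Set.range (w i))

/-- The inefficiency of job `i` on machine `j`. -/
noncomputable def rho {n m : ℕ} (w : Fin n → Fin m → ℝ) (i : Fin n) (j : Fin m) : ℝ :=
  w i j / wmin w i

/-- The load of machine `j` under assignment `N`. -/
noncomputable def load {n m : ℕ} (w : Fin n → Fin m → ℝ) (N : Fin n → Fin m) (j : Fin m) : ℝ :=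
  ∑ i ∈ Finset.univ.filter (fun i => N i = j), w i j

/-- The completion time of job `i` under assignment `N` with the BCOORD mechanism. -/
noncomputable def Bcost {n m : ℕ} (p : ℕ) (w : Fin n → Fin m → ℝ)
    (N : Fin n → Fin m) (i : Fin n) : ℝ :=
  rho w i (N i) ^ ((1 : ℝ) / p) * load w N (N i)

/-- `N` is a pure Nash equilibrium of the game induced by BCOORD. -/
def isNashB {n m : ℕ} (p : ℕ) (w : Fin n → Fin m → ℝ) (N : Fin n → Fin m) : Prop :=
  ∀ (i : Fin n) (j : Fin m), Bcost p w N i ≤ Bcost p w (Function.update N i j) i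

theorem load_nonneg {n m : ℕ} {w : Fin n → Fin m → ℝ} (hw : ∀ i j, 0 < w i j)
    (N : Fin n → Fin m) (j : Fin m) : 0 ≤ load w N j :=
  Finset.sum_nonneg fun i _ => (hw i j).le

theorem le_load {n m : ℕ} {w : Fin n → Fin m → ℝ} (hw : ∀ i j, 0 < w i j)
    (O : Fin n → Fin m) (i : Fin n) : w i (O i) ≤ load w O (O i) :=
  Finset.single_le_sum (f := fun k => w k (O i)) (fun k _ => (hw k _).le) (by simp)

theorem load_update_le {n m : ℕ} {w : Fin n → Fin m → ℝ} (hw : ∀ i j, 0 < w i j)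
    (N : Fin n → Fin m) (i : Fin n) (j : Fin m) :
    load w (Function.update N i j) j ≤ load w N j + w i j := by
  classical
  have hsub : Finset.univ.filter (fun k => Function.update N i j k = j) ⊆
      Finset.univ.filter (fun k => N k = j) ∪ {i} := by
    intro k hk
    by_cases h : k = i <;> simp_all [Function.update_apply]
  have hunion := Finset.sum_union_inter (s₁ := Finset.univ.filter (fun k => N k = j))
    (s₂ := {i}) (f := fun k => w k j)
  have hinter : 0 ≤ ∑ k ∈ Finset.univ.filter (fun k => N k = j) ∩ {i}, w k j :=
    Finset.sum_nonneg fun k _ => (hw k j).le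
  have hle := Finset.sum_le_sum_of_subset_of_nonneg (f := fun k => w k j) hsub
    fun k _ _ => (hw k j).le
  simp only [Finset.sum_singleton] at hunion
  unfold load
  linarith

theorem load_le_norm {n m : ℕ} {w : Fin n → Fin m → ℝ} (hw : ∀ i j, 0 < w i j)
    (N : Fin n → Fin m) (p : ℕ) (j : Fin m) :
    load w N j ≤ (∑ k, load w N k ^ (p + 1)) ^ ((1 : ℝ) / (p + 1)) := by
  have h0 := load_nonneg hw N
  calc load w N j = (load w N j ^ (p + 1)) ^ ((1 : ℝ) / (p + 1)) := by
        have h := Real.pow_rpow_inv_natCast (h0 j) (Nat.succ_ne_zero p)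
        rw [one_div]
        exact_mod_cast h.symm
    _ ≤ _ := Real.rpow_le_rpow (pow_nonneg (h0 j) _)
        (Finset.single_le_sum (f := fun k => load w N k ^ (p + 1))
          (fun k _ => pow_nonneg (h0 k) _) (Finset.mem_univ j)) (by positivity)

theorem stmt_13 (n m : ℕ) (p : ℕ) (hp : 1 ≤ p) (hm : 0 < m)
    (w : Fin n → Fin m → ℝ) (hw : ∀ i j, 0 < w i j)
    (N O : Fin n → Fin m) (hN : isNashB p w N) :
    ∀ i : Fin n, Bcost p w N i ≤
      (∑ j, load w N j ^ (p + 1)) ^ ((1 : ℝ) / (p + 1)) +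
        Finset.univ.sup' ⟨⟨0, hm⟩, Finset.mem_univ _⟩ (load w O) := by
  intro i
  have : Nonempty (Fin m) := ⟨⟨0, hm⟩⟩
  obtain ⟨j, hj⟩ : ∃ j, w i j = wmin w i :=
    (Set.range_nonempty (w i)).csInf_mem (Set.finite_range (w i))
  have hmin : w i j ≤ w i (O i) := by
    rw [hj]
    exact csInf_le (Set.finite_range (w i)).bddBelow ⟨O i, rfl⟩
  have hrho : rho w i j = 1 := by
    rw [rho, ← hj]
    exact div_self (hw i j).ne'
  have hcost : Bcost p w (Function.update N i j) i = load w (Function.update N i j) j := by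
    simp [Bcost, hrho]
  have hsup : load w O (O i) ≤
      Finset.univ.sup' ⟨⟨0, hm⟩, Finset.mem_univ _⟩ (load w O) :=
    Finset.le_sup' (load w O) (Finset.mem_univ (O i))
  have hdev := hN i j
  rw [hcost] at hdev
  linarith [load_update_le hw N i j, load_le_norm hw N p j, le_load hw O i]
end

section
/- Let O be any assignment and N a pure Nash equilibrium of the game induced by CCOORD with integer parameter p ≥ 1. Then Φ(N)^{1/(p+1)} ≤ ((p+1)/ln 2)·Φ(O)^{1/(p+1)}, where Φ(M) = ∑_j Ψ_{p+1}(M_j). -/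
/-!
The numbers `Ψ_k(A)` are the moments `E[X_A ^ k]` of `X_A = ∑ a_i E_i`, with `E_i` independent
standard exponential variables, and `X_{A ++ B} = X_A + X_B` for independent `X_A`, `X_B`
(`Represents`, `exists_represents`). Minkowski's inequality in `L^k` therefore gives
`Ψ_k(A ++ B)^{1/k} ≤ Ψ_k(A)^{1/k} + Ψ_k(B)^{1/k}` (`Psi_append_rpow_le`).

Write `h_k` for `hcomp · k`. Summing the equilibrium condition for the deviations
`N i → O i` and using `h_{p+1}(A) ≤ (∑ A) h_p(A)` on the left and the superadditivity
`∑_{b ∈ B} b h_p(b :: A) + h_{p+1}(A) ≤ h_{p+1}(B ++ A)` on the right gives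
`2 Φ(N) ≤ ∑_j Ψ_{p+1}(O_j ++ N_j)`. By the Minkowski bound on each machine and Minkowski's
inequality for the sum over machines,
`2^{1/(p+1)} Φ(N)^{1/(p+1)} ≤ Φ(O)^{1/(p+1)} + Φ(N)^{1/(p+1)}`, and
`2^{1/(p+1)} - 1 ≥ ln 2 / (p+1)` concludes.
-/

/-- Complete homogeneous sum: sum of all monomials of total degree `k` (with
repetition) in the elements of the list. -/
noncomputable def hcomp : List ℝ → ℕ → ℝ
  | _, 0 => 1
  | [], _ + 1 => 0
  | a :: l, k + 1 => a * hcomp (a :: l) k + hcomp l (k + 1)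
  termination_by l k => (l.length, k)

/-- `Ψ_k(A)`: `k!` times the sum of all monomials of total degree `k` in the
elements of `A`. -/
noncomputable def Psi (k : ℕ) (A : List ℝ) : ℝ := (k.factorial : ℝ) * hcomp A k

/-- The multiset (as a list) of loads of the jobs assigned to machine `j` under `N`. -/
noncomputable def mlist {n m : ℕ} (w : Fin n → Fin m → ℝ) (N : Fin n → Fin m)
    (j : Fin m) : List ℝ :=
  ((List.finRange n).filter (fun i => N i = j)).map (fun i => w i j)

/-- The completion time of job `i` under assignment `N` with the CCOORD mechanism. -/
noncomputable def Ccost {n m : ℕ} (p : ℕ) (w : Fin n → Fin m → ℝ)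
    (N : Fin n → Fin m) (i : Fin n) : ℝ :=
  (rho w i (N i) * Psi p (mlist w N (N i))) ^ ((1 : ℝ) / p)

/-- `N` is a pure Nash equilibrium of the game induced by CCOORD. -/
def isNashC {n m : ℕ} (p : ℕ) (w : Fin n → Fin m → ℝ) (N : Fin n → Fin m) : Prop :=
  ∀ (i : Fin n) (j : Fin m), Ccost p w N i ≤ Ccost p w (Function.update N i j) i

/-- The potential function `Φ`. -/
noncomputable def Phi {n m : ℕ} (p : ℕ) (w : Fin n → Fin m → ℝ)
    (N : Fin n → Fin m) : ℝ :=
  ∑ j, Psi (p + 1) (mlist w N j)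

open MeasureTheory ENNReal

/-! ### Complete homogeneous sums -/

@[simp] lemma hcomp_zero (A : List ℝ) : hcomp A 0 = 1 := by
  cases A <;> simp [hcomp]

@[simp] lemma hcomp_nil_succ (k : ℕ) : hcomp [] (k + 1) = 0 := by simp [hcomp]

lemma hcomp_cons_succ (a : ℝ) (l : List ℝ) (k : ℕ) :
    hcomp (a :: l) (k + 1) = a * hcomp (a :: l) k + hcomp l (k + 1) := by
  rw [hcomp]

lemma hcomp_singleton (a : ℝ) (k : ℕ) : hcomp [a] k = a ^ k := by
  induction k with
  | zero => simp
  | succ k ih => rw [hcomp_cons_succ, ih, hcomp_nil_succ]; ring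

lemma hcomp_nonneg (A : List ℝ) (hA : ∀ a ∈ A, 0 ≤ a) (k : ℕ) : 0 ≤ hcomp A k := by
  induction A generalizing k with
  | nil => cases k <;> simp
  | cons a l ih =>
    simp only [List.mem_cons, forall_eq_or_imp] at hA
    induction k with
    | zero => simp
    | succ k ihk =>
      rw [hcomp_cons_succ]
      exact add_nonneg (mul_nonneg hA.1 ihk) (ih hA.2 _)

/-- Concatenation is the Cauchy product of the sequences `hcomp A` and `hcomp B`. -/
lemma hcomp_append (A B : List ℝ) (k : ℕ) :
    hcomp (A ++ B) k = ∑ x ∈ Finset.HasAntidiagonal.antidiagonal k, hcomp A x.1 * hcomp B x.2 := by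
  induction A generalizing k with
  | nil =>
    cases k with
    | zero => simp
    | succ k => rw [Finset.Nat.sum_antidiagonal_succ]; simp
  | cons a l ih =>
    induction k with
    | zero => simp
    | succ k ihk =>
      rw [List.cons_append, hcomp_cons_succ, ← List.cons_append, ihk, ih,
        Finset.Nat.sum_antidiagonal_succ, Finset.Nat.sum_antidiagonal_succ]
      simp only [hcomp_cons_succ, add_mul, Finset.sum_add_distrib, Finset.mul_sum, hcomp_zero,
        mul_assoc]
      ring

lemma hcomp_append_comm (A B : List ℝ) (k : ℕ) : hcomp (A ++ B) k = hcomp (B ++ A) k := by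
  rw [hcomp_append, hcomp_append, ← Finset.Nat.sum_antidiagonal_swap]
  exact Finset.sum_congr rfl fun x _ => mul_comm _ _

lemma hcomp_perm {A B : List ℝ} (h : A.Perm B) (k : ℕ) : hcomp A k = hcomp B k := by
  induction h generalizing k with
  | nil => rfl
  | cons a _ ih =>
    induction k with
    | zero => simp
    | succ k ihk => rw [hcomp_cons_succ, hcomp_cons_succ, ihk, ih]
  | swap a b l =>
    rw [show b :: a :: l = ([b] ++ [a]) ++ l from rfl,
      show a :: b :: l = ([a] ++ [b]) ++ l from rfl, hcomp_append, hcomp_append]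
    exact Finset.sum_congr rfl fun x _ => by rw [hcomp_append_comm]
  | trans _ _ ih1 ih2 => rw [ih1, ih2]

lemma hcomp_le_append (A B : List ℝ) (hA : ∀ a ∈ A, 0 ≤ a) (hB : ∀ a ∈ B, 0 ≤ a) (k : ℕ) :
    hcomp B k ≤ hcomp (A ++ B) k := by
  rw [hcomp_append]
  have := Finset.single_le_sum (f := fun x : ℕ × ℕ => hcomp A x.1 * hcomp B x.2)
    (fun x _ => mul_nonneg (hcomp_nonneg A hA _) (hcomp_nonneg B hB _))
    (show (0, k) ∈ Finset.HasAntidiagonal.antidiagonal k by simp)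
  simpa using this

lemma hcomp_succ_le_sum_mul (A : List ℝ) (hA : ∀ a ∈ A, 0 ≤ a) (k : ℕ) :
    hcomp A (k + 1) ≤ A.sum * hcomp A k := by
  induction A with
  | nil => simp
  | cons a l ih =>
    have hl : ∀ x ∈ l, 0 ≤ x := fun x hx => hA x (List.mem_cons_of_mem _ hx)
    have h1 : hcomp l k ≤ hcomp (a :: l) k :=
      hcomp_le_append [a] l (by simpa using hA a List.mem_cons_self) hl k
    have h2 := mul_le_mul_of_nonneg_left h1 (List.sum_nonneg hl)
    rw [hcomp_cons_succ, List.sum_cons]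
    linarith [ih hl]

/-- Superadditivity: adding the elements of `B` to `A` one at a time, each marginal increase
`b * hcomp (b :: ⋯) k` is at least the increase `b * hcomp (b :: A) k` it would cause alone. -/
lemma sum_marginal_le (A B : List ℝ) (hA : ∀ a ∈ A, 0 ≤ a) (hB : ∀ a ∈ B, 0 ≤ a) (k : ℕ) :
    (B.map fun b => b * hcomp (b :: A) k).sum + hcomp A (k + 1) ≤ hcomp (B ++ A) (k + 1) := by
  induction B with
  | nil => simp
  | cons b B ih =>
    simp only [List.mem_cons, forall_eq_or_imp] at hB
    have h1 : hcomp (b :: A) k ≤ hcomp (b :: (B ++ A)) k := by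
      rw [← hcomp_perm (List.perm_middle (a := b) (l₁ := B) (l₂ := A))]
      refine hcomp_le_append _ _ hB.2 ?_ k
      simpa using ⟨hB.1, hA⟩
    have h2 := mul_le_mul_of_nonneg_left h1 hB.1
    rw [List.map_cons, List.sum_cons, List.cons_append, hcomp_cons_succ]
    linarith [ih hB.2]

lemma Psi_nonneg (A : List ℝ) (hA : ∀ a ∈ A, 0 ≤ a) (k : ℕ) : 0 ≤ Psi k A :=
  mul_nonneg (by positivity) (hcomp_nonneg A hA k)

/-! ### Moment representation and Minkowski's inequality -/

/-- `μ` is a measure on `[0, ∞]` whose `k`-th moment is `Ψ_k(A)` for every `k`. Working in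
`[0, ∞]` with the lower integral makes all integrability side conditions disappear. -/
def Represents (μ : Measure ℝ≥0∞) (A : List ℝ) : Prop :=
  ∀ k : ℕ, ∫⁻ x, x ^ k ∂μ = ENNReal.ofReal (Psi k A)

lemma Represents.isProbabilityMeasure {μ : Measure ℝ≥0∞} {A : List ℝ} (h : Represents μ A) :
    IsProbabilityMeasure μ :=
  ⟨by simpa [Psi] using h 0⟩

lemma Psi_append (A B : List ℝ) (k : ℕ) :
    Psi k (A ++ B) =
      ∑ x ∈ Finset.HasAntidiagonal.antidiagonal k, (k.choose x.1 : ℝ) * (Psi x.1 A * Psi x.2 B) := by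
  rw [Psi, hcomp_append, Finset.mul_sum]
  refine Finset.sum_congr rfl fun x hx => ?_
  obtain rfl : x.1 + x.2 = k := Finset.HasAntidiagonal.mem_antidiagonal.1 hx
  rw [Psi, Psi, ← Nat.choose_mul_factorial_mul_factorial (Nat.le_add_right x.1 x.2),
    Nat.add_sub_cancel_left]
  push_cast
  ring

/-- The moments of a sum of independent variables, by the binomial theorem. -/
lemma lintegral_prod_add_pow {μ ν : Measure ℝ≥0∞} {A B : List ℝ}
    (hA : ∀ a ∈ A, 0 ≤ a) (hB : ∀ a ∈ B, 0 ≤ a)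
    (hμ : Represents μ A) (hν : Represents ν B) (k : ℕ) :
    ∫⁻ z, (z.1 + z.2) ^ k ∂(μ.prod ν) = ENNReal.ofReal (Psi k (A ++ B)) := by
  have := hμ.isProbabilityMeasure
  have := hν.isProbabilityMeasure
  rw [Psi_append, ENNReal.ofReal_sum_of_nonneg]
  swap
  · exact fun x _ => mul_nonneg (by positivity) (mul_nonneg (Psi_nonneg A hA _) (Psi_nonneg B hB _))
  have hbin (z : ℝ≥0∞ × ℝ≥0∞) := (Commute.all z.1 z.2).add_pow' k
  simp_rw [hbin]
  rw [lintegral_finsetSum _ (fun x _ => by fun_prop)]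
  refine Finset.sum_congr rfl fun x _ => ?_
  simp_rw [nsmul_eq_mul]
  rw [lintegral_const_mul _ (by fun_prop),
    lintegral_prod_mul (f := fun y => y ^ x.1) (g := fun y => y ^ x.2)
      (by fun_prop) (by fun_prop), hμ, hν,
    ENNReal.ofReal_mul (by positivity), ENNReal.ofReal_mul (Psi_nonneg A hA _),
    ENNReal.ofReal_natCast]

lemma Represents.append {μ ν : Measure ℝ≥0∞} {A B : List ℝ}
    (hA : ∀ a ∈ A, 0 ≤ a) (hB : ∀ a ∈ B, 0 ≤ a)
    (hμ : Represents μ A) (hν : Represents ν B) :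
    Represents ((μ.prod ν).map fun z => z.1 + z.2) (A ++ B) := by
  intro k
  rw [lintegral_map (by fun_prop) (by fun_prop)]
  exact lintegral_prod_add_pow hA hB hμ hν k

/-- A singleton `[a]` is represented by `a` times a standard exponential variable, whose
moments `a ^ k * k!` come from the Gamma integral. -/
lemma exists_represents_singleton (a : ℝ) (ha : 0 ≤ a) : ∃ μ, Represents μ [a] := by
  refine ⟨((volume.restrict (Set.Ioi (0 : ℝ))).withDensity
    fun x => ENNReal.ofReal (Real.exp (-x))).map fun x => ENNReal.ofReal (a * x), fun k => ?_⟩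
  rw [lintegral_map (by fun_prop) (by fun_prop),
    lintegral_withDensity_eq_lintegral_mul _ (by fun_prop) (by fun_prop)]
  have hconv : IntegrableOn (fun x : ℝ => Real.exp (-x) * x ^ k) (Set.Ioi 0) := by
    have := Real.GammaIntegral_convergent (s := (k : ℝ) + 1) (by positivity)
    simpa using this
  have hval : ∫ x in Set.Ioi (0 : ℝ), Real.exp (-x) * x ^ k = k.factorial := by
    rw [← Real.Gamma_nat_eq_factorial, Real.Gamma_eq_integral (by positivity)]
    simp
  rw [Psi, hcomp_singleton, ← hval, ← integral_mul_const,
    ofReal_integral_eq_lintegral_ofReal (hconv.mul_const _)]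
  · refine setLIntegral_congr_fun measurableSet_Ioi fun x hx => ?_
    have hx' : (0 : ℝ) < x := hx
    simp only [Pi.mul_apply]
    rw [← ENNReal.ofReal_pow (by positivity), ← ENNReal.ofReal_mul (by positivity)]
    congr 1
    ring
  · filter_upwards [ae_restrict_mem measurableSet_Ioi] with x hx
    have hx' : (0 : ℝ) < x := hx
    simp only [Pi.zero_apply]
    positivity

lemma exists_represents (A : List ℝ) (hA : ∀ a ∈ A, 0 ≤ a) : ∃ μ, Represents μ A := by
  induction A with
  | nil =>
    refine ⟨Measure.dirac 0, fun k => ?_⟩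
    rw [lintegral_dirac' _ (by fun_prop)]
    cases k <;> simp [Psi]
  | cons a l ih =>
    simp only [List.mem_cons, forall_eq_or_imp] at hA
    obtain ⟨μ, hμ⟩ := exists_represents_singleton a hA.1
    obtain ⟨ν, hν⟩ := ih hA.2
    exact ⟨_, hμ.append (A := [a]) (by simpa using hA.1) hA.2 hν⟩

/-- Minkowski's inequality in `L^k` for independent representatives of `A` and `B`. -/
lemma Psi_append_rpow_le (A B : List ℝ) (hA : ∀ a ∈ A, 0 ≤ a) (hB : ∀ a ∈ B, 0 ≤ a)
    (k : ℕ) (hk : 1 ≤ k) :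
    Psi k (A ++ B) ^ ((1 : ℝ) / k) ≤ Psi k A ^ ((1 : ℝ) / k) + Psi k B ^ ((1 : ℝ) / k) := by
  obtain ⟨μ, hμ⟩ := exists_represents A hA
  obtain ⟨ν, hν⟩ := exists_represents B hB
  have := hμ.isProbabilityMeasure
  have := hν.isProbabilityMeasure
  have hAB : ∀ a ∈ A ++ B, 0 ≤ a := by
    intro a ha
    exact (List.mem_append.1 ha).elim (hA a) (hB a)
  have key := ENNReal.lintegral_Lp_add_le (μ := μ.prod ν) (p := (k : ℝ))
    (f := fun z : ℝ≥0∞ × ℝ≥0∞ => z.1) (g := fun z => z.2) (by fun_prop) (by fun_prop)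
    (by exact_mod_cast hk)
  simp only [Pi.add_apply, ENNReal.rpow_natCast] at key
  have h1 : ∫⁻ z, z.1 ^ k ∂(μ.prod ν) = ENNReal.ofReal (Psi k A) := by
    simpa using (lintegral_prod_mul (μ := μ) (ν := ν) (f := fun y : ℝ≥0∞ => y ^ k)
      (g := fun _ => 1) (by fun_prop) (by fun_prop)).trans (by simp [hμ k])
  have h2 : ∫⁻ z, z.2 ^ k ∂(μ.prod ν) = ENNReal.ofReal (Psi k B) := by
    simpa using (lintegral_prod_mul (μ := μ) (ν := ν) (f := fun _ : ℝ≥0∞ => 1)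
      (g := fun y => y ^ k) (by fun_prop) (by fun_prop)).trans (by simp [hν k])
  have hk0 : (0 : ℝ) ≤ 1 / k := by positivity
  have pA := Psi_nonneg A hA k
  have pB := Psi_nonneg B hB k
  rw [lintegral_prod_add_pow hA hB hμ hν, h1, h2,
    ENNReal.ofReal_rpow_of_nonneg (Psi_nonneg _ hAB k) hk0,
    ENNReal.ofReal_rpow_of_nonneg pA hk0, ENNReal.ofReal_rpow_of_nonneg pB hk0,
    ← ENNReal.ofReal_add (by positivity) (by positivity)] at key
  exact (ENNReal.ofReal_le_ofReal_iff (by positivity)).1 key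

/-! ### The equilibrium condition -/

section Game

variable {n m : ℕ} {w : Fin n → Fin m → ℝ}

lemma mlist_nonneg (hw : ∀ i j, 0 < w i j) (N : Fin n → Fin m) (j : Fin m) :
    ∀ a ∈ mlist w N j, 0 ≤ a := by
  intro a ha
  obtain ⟨i, -, rfl⟩ := List.mem_map.1 ha
  exact (hw i j).le

lemma sum_map_mlist (N : Fin n → Fin m) (f : Fin m → ℝ → ℝ) :
    ∑ j, ((mlist w N j).map (f j)).sum = ∑ i, f (N i) (w i (N i)) := by
  have h (j : Fin m) : ((mlist w N j).map (f j)).sum =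
      ∑ i, if N i = j then f j (w i j) else 0 := by
    rw [Fin.sum_univ_def, mlist]
    induction List.finRange n with
    | nil => simp
    | cons i l ih => by_cases hi : N i = j <;> simp [hi, ← ih]
  simp_rw [h]
  rw [Finset.sum_comm]
  simp

lemma mlist_update_perm (N : Fin n → Fin m) (i : Fin n) (j : Fin m) (hij : N i ≠ j) :
    (mlist w (Function.update N i j) j).Perm (w i j :: mlist w N j) := by
  have hnd := List.nodup_finRange n
  rw [mlist, mlist, ← List.map_cons (f := fun i => w i j)]
  refine List.Perm.map _ ?_
  rw [List.perm_ext_iff_of_nodup (hnd.filter _)]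
  · intro a
    by_cases ha : a = i
    · subst ha; simp
    · simp [ha]
  · refine List.nodup_cons.2 ⟨?_, hnd.filter _⟩
    simp [hij]

lemma wmin_pos (hw : ∀ i j, 0 < w i j) (i : Fin n) (j : Fin m) : 0 < wmin w i := by
  have : Nonempty (Fin m) := ⟨j⟩
  obtain ⟨j', hj'⟩ := (Set.range_nonempty (w i)).csInf_mem (Set.finite_range _)
  rw [wmin, ← hj']
  exact hw i j'

/-- The equilibrium condition with the common factors `wmin w i` and `p!` and the outer `p`-th
root removed. -/
lemma nash_le {p : ℕ} (hp : 1 ≤ p) (hw : ∀ i j, 0 < w i j) {N : Fin n → Fin m}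
    (hN : isNashC p w N) (i : Fin n) (j : Fin m) :
    w i (N i) * hcomp (mlist w N (N i)) p ≤ w i j * hcomp (w i j :: mlist w N j) p := by
  by_cases hij : N i = j
  · subst hij
    refine mul_le_mul_of_nonneg_left ?_ (hw _ _).le
    exact hcomp_le_append [w i (N i)] _ (by simpa using (hw _ _).le) (mlist_nonneg hw N _) p
  · have hwm := wmin_pos hw i j
    have hfac : (0 : ℝ) < p.factorial := by positivity
    have h := hN i j
    have hnn (M : Fin n → Fin m) : 0 ≤ rho w i (M i) * Psi p (mlist w M (M i)) :=
      mul_nonneg (div_nonneg (hw _ _).le hwm.le) (Psi_nonneg _ (mlist_nonneg hw _ _) _)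
    rw [Ccost, Ccost, Real.rpow_le_rpow_iff (hnn _) (hnn _) (by positivity),
      Function.update_self, Psi, Psi, hcomp_perm (mlist_update_perm N i j hij), rho, rho,
      div_mul_eq_mul_div, div_mul_eq_mul_div, div_le_div_iff_of_pos_right hwm] at h
    refine le_of_mul_le_mul_left ?_ hfac
    linarith

lemma two_mul_Phi_le {p : ℕ} (hp : 1 ≤ p) (hw : ∀ i j, 0 < w i j) {N : Fin n → Fin m}
    (O : Fin n → Fin m) (hN : isNashC p w N) :
    2 * Phi p w N ≤ ∑ j, Psi (p + 1) (mlist w O j ++ mlist w N j) := by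
  have h1 : ∑ j, hcomp (mlist w N j) (p + 1) ≤
      ∑ i, w i (N i) * hcomp (mlist w N (N i)) p := by
    rw [← sum_map_mlist N fun j b => b * hcomp (mlist w N j) p]
    refine Finset.sum_le_sum fun j _ => ?_
    rw [List.sum_map_mul_right, List.map_id']
    exact hcomp_succ_le_sum_mul _ (mlist_nonneg hw N j) p
  have h2 : ∑ i, w i (N i) * hcomp (mlist w N (N i)) p ≤
      ∑ j, ((mlist w O j).map fun b => b * hcomp (b :: mlist w N j) p).sum := by
    rw [sum_map_mlist O fun j b => b * hcomp (b :: mlist w N j) p]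
    exact Finset.sum_le_sum fun i _ => nash_le hp hw hN i (O i)
  have h3 := Finset.sum_le_sum fun j (_ : j ∈ Finset.univ) =>
    sum_marginal_le _ _ (mlist_nonneg hw N j) (mlist_nonneg hw O j) p
  rw [Finset.sum_add_distrib] at h3
  simp only [Phi, Psi, ← Finset.mul_sum]
  have hfac : (0 : ℝ) ≤ (p + 1).factorial := by positivity
  nlinarith

/-- Minkowski's inequality for the whole assignment: first on each machine, then for the
`ℓ^{p+1}`-sum over machines. -/
lemma sum_Psi_append_rpow_le (p : ℕ) (hw : ∀ i j, 0 < w i j) (N O : Fin n → Fin m) :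
    (∑ j, Psi (p + 1) (mlist w O j ++ mlist w N j)) ^ ((1 : ℝ) / (p + 1)) ≤
      Phi p w O ^ ((1 : ℝ) / (p + 1)) + Phi p w N ^ ((1 : ℝ) / (p + 1)) := by
  have hq : (0 : ℝ) < (p : ℝ) + 1 := by positivity
  have hroot {x : ℝ} (hx : 0 ≤ x) : (x ^ ((1 : ℝ) / (p + 1))) ^ ((p : ℝ) + 1) = x := by
    rw [← Real.rpow_mul hx, one_div_mul_cancel hq.ne', Real.rpow_one]
  have pN (M : Fin n → Fin m) (j : Fin m) : 0 ≤ Psi (p + 1) (mlist w M j) :=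
    Psi_nonneg _ (mlist_nonneg hw M j) _
  have pON (j : Fin m) : 0 ≤ Psi (p + 1) (mlist w O j ++ mlist w N j) :=
    Psi_nonneg _ (fun a ha => (List.mem_append.1 ha).elim
      (mlist_nonneg hw O j a) (mlist_nonneg hw N j a)) _
  have key := Real.Lp_add_le_of_nonneg Finset.univ (p := (p : ℝ) + 1) (by simp)
    (f := fun j => Psi (p + 1) (mlist w O j) ^ ((1 : ℝ) / (p + 1)))
    (g := fun j => Psi (p + 1) (mlist w N j) ^ ((1 : ℝ) / (p + 1)))
    (fun j _ => Real.rpow_nonneg (pN O j) _) (fun j _ => Real.rpow_nonneg (pN N j) _)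
  simp only [hroot (pN _ _)] at key
  refine le_trans (Real.rpow_le_rpow (Finset.sum_nonneg fun j _ => pON j) ?_ (by positivity)) key
  refine Finset.sum_le_sum fun j _ => ?_
  have h := Psi_append_rpow_le _ _ (mlist_nonneg hw O j) (mlist_nonneg hw N j) (p + 1) (by omega)
  push_cast at h
  have h' := Real.rpow_le_rpow (Real.rpow_nonneg (pON j) _) h hq.le
  rwa [hroot (pON j)] at h'

end Game

theorem stmt_17 (n m : ℕ) (p : ℕ) (hp : 1 ≤ p)
    (w : Fin n → Fin m → ℝ) (hw : ∀ i j, 0 < w i j)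
    (N O : Fin n → Fin m) (hN : isNashC p w N) :
    Phi p w N ^ ((1 : ℝ) / (p + 1)) ≤
      ((p + 1) / Real.log 2) * Phi p w O ^ ((1 : ℝ) / (p + 1)) := by
  have hq : (0 : ℝ) < (p : ℝ) + 1 := by positivity
  have hlog : 0 < Real.log 2 := Real.log_pos one_lt_two
  have hΦ : 0 ≤ Phi p w N := Finset.sum_nonneg fun j _ => Psi_nonneg _ (mlist_nonneg hw N j) _
  have h1 := (Real.rpow_le_rpow (by positivity) (two_mul_Phi_le hp hw O hN)
    (by positivity : (0 : ℝ) ≤ 1 / (p + 1))).trans (sum_Psi_append_rpow_le p hw N O)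
  rw [Real.mul_rpow zero_le_two hΦ] at h1
  have h2 : Real.log 2 / (p + 1) + 1 ≤ (2 : ℝ) ^ ((1 : ℝ) / (p + 1)) := by
    rw [Real.rpow_def_of_pos two_pos, mul_one_div]
    exact Real.add_one_le_exp _
  have h3 := mul_le_mul_of_nonneg_right h2 (Real.rpow_nonneg hΦ ((1 : ℝ) / (p + 1)))
  have h4 : Real.log 2 / (p + 1) * Phi p w N ^ ((1 : ℝ) / (p + 1)) ≤
      Phi p w O ^ ((1 : ℝ) / (p + 1)) := by linarith
  rw [div_mul_eq_mul_div, div_le_iff₀ hq] at h4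
  rw [div_mul_eq_mul_div, le_div_iff₀ hlog]
  linarith
end
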